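/- arXiv:1201.5392 — 7 statements merged into one kernel-verified Lean document; each statement's English description precedes it below -/
import Mathlib

section
/- Let m ≥ 3 be an integer. The function f₂ is strictly concave on (0,∞), attains its maximum exactly at a = √(m/(m−1)) with f₂(√(m/(m−1))) = m/(m−1), and moreover f₁(√(m/(m−1))) = 2m/(m−1)² ≤ m/(m−1). -/
/-!
Write `s = √(m/(m-1))`, `c = (m-2)s/2 > 0`. Then `f₂(a) = (m - ca)/(1 + c/a)`, and the relation
`m + c² = (s + c)²` holds because both sides equal `m³/(4(m-1))`. Polynomial division gives
`f₂(a) = (s + c)² - ca - c(s + c)²/(a + c)` (`f₂_eq_affine_sub`): an affine function minus a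
positive multiple of the strictly convex function `1/(a + c)`, hence strictly concave. The same
formula rearranges to `f₂(a) = s² - c(a - s)²/(a + c)` (`f₂_eq_sub_sq`), which exhibits the unique
maximum.
-/

noncomputable def f₁ (m : ℕ) (a : ℝ) : ℝ :=
  ((m : ℝ) ^ 2 / ((m : ℝ) - 1) ^ 2) /
    (1 + (((m : ℝ) - 2) / (2 * a)) * Real.sqrt ((m : ℝ) / ((m : ℝ) - 1)))

noncomputable def f₂ (m : ℕ) (a : ℝ) : ℝ :=
  ((m : ℝ) - (a * ((m : ℝ) - 2) / 2) * Real.sqrt ((m : ℝ) / ((m : ℝ) - 1))) /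
    (1 + (((m : ℝ) - 2) / (2 * a)) * Real.sqrt ((m : ℝ) / ((m : ℝ) - 1)))

/-- Strict convexity of `1/u` on the positive reals, which rests on the identity
`p/u + q/v - 1/(pu + qv) = pq(u - v)²/(uv(pu + qv))` for `p + q = 1`. -/
lemma inv_combo_lt {u v p q : ℝ} (hu : 0 < u) (hv : 0 < v) (huv : u ≠ v)
    (hp : 0 < p) (hq : 0 < q) (hpq : p + q = 1) :
    1 / (p * u + q * v) < p / u + q / v := by
  have hw : 0 < p * u + q * v := by positivity
  have hd : 0 < (u - v) ^ 2 := by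
    have := sub_ne_zero.mpr huv
    positivity
  have key : p / u + q / v - 1 / (p * u + q * v)
      = p * q * (u - v) ^ 2 / (u * v * (p * u + q * v)) := by
    obtain rfl : q = 1 - p := by linarith
    field_simp
    ring
  have : 0 < p * q * (u - v) ^ 2 / (u * v * (p * u + q * v)) := by positivity
  linarith

/-- The relations between `s = √(m/(m-1))` and `c = (m-2)s/2` on which everything rests. -/
lemma sqrt_facts {m : ℕ} (hm : 3 ≤ m) {s c : ℝ} (hs : s = Real.sqrt ((m : ℝ) / ((m : ℝ) - 1)))
    (hc : c = ((m : ℝ) - 2) / 2 * s) :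
    0 < s ∧ 0 < c ∧ s ^ 2 = (m : ℝ) / ((m : ℝ) - 1) ∧ (m : ℝ) + c ^ 2 = (s + c) ^ 2 := by
  have h3 : (3 : ℝ) ≤ m := by exact_mod_cast hm
  have h1 : (0 : ℝ) < (m : ℝ) - 1 := by linarith
  have h2 : (0 : ℝ) < (m : ℝ) - 2 := by linarith
  have hpos : 0 < (m : ℝ) / ((m : ℝ) - 1) := by positivity
  have hs0 : 0 < s := hs ▸ Real.sqrt_pos.mpr hpos
  have hsq : s ^ 2 = (m : ℝ) / ((m : ℝ) - 1) := by rw [hs, Real.sq_sqrt hpos.le]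
  refine ⟨hs0, by rw [hc]; positivity, hsq, ?_⟩
  have h : s ^ 2 * ((m : ℝ) - 1) = m := by rw [hsq]; field_simp
  rw [hc]
  linear_combination -h

lemma f₂_eq_affine_sub {m : ℕ} (hm : 3 ≤ m) {s c : ℝ}
    (hs : s = Real.sqrt ((m : ℝ) / ((m : ℝ) - 1))) (hc : c = ((m : ℝ) - 2) / 2 * s)
    {a : ℝ} (ha : 0 < a) :
    f₂ m a = (s + c) ^ 2 - c * a - c * (s + c) ^ 2 * (1 / (a + c)) := by
  obtain ⟨-, hc0, -, hK⟩ := sqrt_facts hm hs hc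
  have hac : a + c ≠ 0 := by positivity
  have hform : f₂ m a = ((m : ℝ) - a * c) / (1 + c / a) := by
    unfold f₂
    rw [← hs, hc]
    congr 1
    · ring
    · field_simp
  rw [hform, ← hK]
  field_simp
  ring

lemma f₂_eq_sub_sq {m : ℕ} (hm : 3 ≤ m) {s c : ℝ}
    (hs : s = Real.sqrt ((m : ℝ) / ((m : ℝ) - 1))) (hc : c = ((m : ℝ) - 2) / 2 * s)
    {a : ℝ} (ha : 0 < a) :
    f₂ m a = s ^ 2 - c * (a - s) ^ 2 / (a + c) := by
  obtain ⟨-, hc0, -, -⟩ := sqrt_facts hm hs hc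
  have hac : a + c ≠ 0 := by positivity
  rw [f₂_eq_affine_sub hm hs hc ha]
  field_simp
  ring

/-- `f₂` is strictly concave on `(0,∞)`, attains its maximum exactly at `a = √(m/(m−1))`
with value `m/(m−1)`, and `f₁(√(m/(m−1))) = 2m/(m−1)² ≤ m/(m−1)`. -/
theorem f₂_strictConcave_max (m : ℕ) (hm : 3 ≤ m) :
    StrictConcaveOn ℝ (Set.Ioi (0 : ℝ)) (f₂ m) ∧
    f₂ m (Real.sqrt ((m : ℝ) / ((m : ℝ) - 1))) = (m : ℝ) / ((m : ℝ) - 1) ∧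
    (∀ a : ℝ, 0 < a → a ≠ Real.sqrt ((m : ℝ) / ((m : ℝ) - 1)) →
      f₂ m a < f₂ m (Real.sqrt ((m : ℝ) / ((m : ℝ) - 1)))) ∧
    f₁ m (Real.sqrt ((m : ℝ) / ((m : ℝ) - 1))) = 2 * (m : ℝ) / ((m : ℝ) - 1) ^ 2 ∧
    2 * (m : ℝ) / ((m : ℝ) - 1) ^ 2 ≤ (m : ℝ) / ((m : ℝ) - 1) := by
  obtain ⟨s, hs⟩ : ∃ s, s = Real.sqrt ((m : ℝ) / ((m : ℝ) - 1)) := ⟨_, rfl⟩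
  obtain ⟨c, hc⟩ : ∃ c, c = ((m : ℝ) - 2) / 2 * s := ⟨_, rfl⟩
  obtain ⟨hs0, hc0, hsq, -⟩ := sqrt_facts hm hs hc
  have h3 : (3 : ℝ) ≤ m := by exact_mod_cast hm
  have h1 : (0 : ℝ) < (m : ℝ) - 1 := by linarith
  have hmax : f₂ m s = s ^ 2 := by simp [f₂_eq_sub_sq hm hs hc hs0]
  rw [← hs]
  refine ⟨⟨convex_Ioi 0, ?_⟩, hmax.trans hsq, ?_, ?_, ?_⟩
  · intro x hx y hy hxy p q hp hq hpq
    have hx : 0 < x := hx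
    have hy : 0 < y := hy
    have hinv := inv_combo_lt (u := x + c) (v := y + c) (by positivity) (by positivity)
      (fun h => hxy (add_right_cancel h)) hp hq hpq
    have hw : p * (x + c) + q * (y + c) = p * x + q * y + c := by linear_combination c * hpq
    rw [hw] at hinv
    have hK : 0 < c * (s + c) ^ 2 := by positivity
    have := mul_lt_mul_of_pos_left hinv hK
    simp only [smul_eq_mul]
    rw [f₂_eq_affine_sub hm hs hc hx, f₂_eq_affine_sub hm hs hc hy,
      f₂_eq_affine_sub hm hs hc (by positivity : 0 < p * x + q * y)]
    linear_combination this + (s + c) ^ 2 * hpq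
  · intro a ha hne
    rw [hmax, f₂_eq_sub_sq hm hs hc ha]
    have := sub_ne_zero.mpr hne
    have : 0 < c * (a - s) ^ 2 / (a + c) := by positivity
    linarith
  · have hden : 1 + ((m : ℝ) - 2) / (2 * s) * s = m / 2 := by
      field_simp
      ring
    unfold f₁
    rw [← hs, hden]
    field_simp
  · rw [div_le_div_iff₀ (by positivity) h1]
    have : 0 ≤ (m : ℝ) * ((m : ℝ) - 1) * ((m : ℝ) - 3) :=
      mul_nonneg (by positivity) (by linarith)
    linarith
end

section
/- Let m ≥ 3 be an integer and set a₁₂ = 2m(m²−3m+1) / ((m−2)(m−1)²·√(m/(m−1))). Then a₁₂ > 0, f₁(a₁₂) = f₂(a₁₂) = (m²/(m−1)²)·(1 + (m−2)²(m−1)/(4(m²−3m+1)))^{−1}, f₁(a) < f₂(a) for all a ∈ (0, a₁₂), and f₁(a) > f₂(a) for all a > a₁₂. -/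
/-- At `a₁₂ = 2m(m²−3m+1)/((m−2)(m−1)²√(m/(m−1)))` the graphs of `f₁` and `f₂` intersect,
with common value `(m²/(m−1)²)(1 + (m−2)²(m−1)/(4(m²−3m+1)))⁻¹`; moreover `f₁ < f₂`
before `a₁₂` and `f₁ > f₂` after `a₁₂`. -/
theorem f₁_f₂_intersection (m : ℕ) (hm : 3 ≤ m)
    (a₁₂ : ℝ)
    (ha₁₂ : a₁₂ = 2 * (m : ℝ) * ((m : ℝ) ^ 2 - 3 * (m : ℝ) + 1) /
      (((m : ℝ) - 2) * ((m : ℝ) - 1) ^ 2 * Real.sqrt ((m : ℝ) / ((m : ℝ) - 1)))) :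
    0 < a₁₂ ∧
    f₁ m a₁₂ = f₂ m a₁₂ ∧
    f₁ m a₁₂ = ((m : ℝ) ^ 2 / ((m : ℝ) - 1) ^ 2) *
      (1 + ((m : ℝ) - 2) ^ 2 * ((m : ℝ) - 1) /
        (4 * ((m : ℝ) ^ 2 - 3 * (m : ℝ) + 1)))⁻¹ ∧
    (∀ a : ℝ, a ∈ Set.Ioo (0 : ℝ) a₁₂ → f₁ m a < f₂ m a) ∧
    (∀ a : ℝ, a₁₂ < a → f₂ m a < f₁ m a) := by
  have hm3 : (3 : ℝ) ≤ (m : ℝ) := by exact_mod_cast hm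
  unfold f₁ f₂
  generalize (m : ℝ) = x at *
  have h1 : 0 < x - 1 := by linarith
  have h2 : 0 < x - 2 := by linarith
  have hx : 0 < x := by linarith
  have hq : 0 < x ^ 2 - 3 * x + 1 := by nlinarith
  have hs : 0 < Real.sqrt (x / (x - 1)) := Real.sqrt_pos.mpr (by positivity)
  have hs2 : Real.sqrt (x / (x - 1)) ^ 2 = x / (x - 1) := Real.sq_sqrt (by positivity)
  generalize Real.sqrt (x / (x - 1)) = s at *
  have ha : 0 < a₁₂ := by rw [ha₁₂]; positivity
  have hden : ∀ a : ℝ, 0 < a → 0 < 1 + (x - 2) / (2 * a) * s := fun a h => by positivity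
  have hnum : ∀ a : ℝ, x - a * (x - 2) / 2 * s
      = x ^ 2 / (x - 1) ^ 2 + (x - 2) * s / 2 * (a₁₂ - a) := by
    intro a
    rw [ha₁₂]
    field_simp
    ring
  have hc : 0 < (x - 2) * s / 2 := by positivity
  have hval : (x - 2) / (2 * a₁₂) * s = (x - 2) ^ 2 * (x - 1) / (4 * (x ^ 2 - 3 * x + 1)) := by
    have e : (x - 2) / (2 * a₁₂) * s
        = (x - 2) ^ 2 * (x - 1) ^ 2 * s ^ 2 / (4 * x * (x ^ 2 - 3 * x + 1)) := by
      rw [ha₁₂]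
      have := hq.ne'
      field_simp
      ring
    rw [e, hs2]
    have := hq.ne'
    field_simp
  refine ⟨ha, ?_, ?_, ?_, ?_⟩
  · rw [hnum a₁₂, sub_self, mul_zero, add_zero]
  · rw [hval, div_eq_mul_inv]
  · rintro a ⟨h0, h⟩
    rw [hnum a]
    exact div_lt_div_of_pos_right (lt_add_of_pos_right _ (mul_pos hc (sub_pos.mpr h))) (hden a h0)
  · intro a h
    rw [hnum a]
    exact div_lt_div_of_pos_right
      (add_lt_of_neg_right _ (mul_neg_of_pos_of_neg hc (sub_neg.mpr h))) (hden a (ha.trans h))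
end

section
/- Let m ≥ 3 be an integer and set a₁₂ = 2m(m²−3m+1) / ((m−2)(m−1)²·√(m/(m−1))). Then for every a > 0, min(f₁(a), f₂(a)) ≤ (m²/(m−1)²)·(1 + (m−2)²(m−1)/(4(m²−3m+1)))^{−1}, with equality if and only if a = a₁₂. In other words, the supremum over a > 0 of min(f₁(a), f₂(a)) is attained exactly at a₁₂ and equals (m²/(m−1)²)·(1 + (m−2)²(m−1)/(4(m²−3m+1)))^{−1}. -/
theorem div_one_add_div_lt {K c a b : ℝ} (hK : 0 < K) (hc : 0 < c) (ha : 0 < a) (hab : a < b) :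
    K / (1 + c / a) < K / (1 + c / b) := by
  have hb : 0 < b := ha.trans hab
  have h : c / b < c / a := div_lt_div_of_pos_left hc ha hab
  exact div_lt_div_of_pos_left hK (by positivity) (by linarith)

/-- The function `a ↦ (x - c a) / (1 + c / a)` stays strictly below its value at `b` to the
right of `b`, for any `b > 0` with `x ≤ b² + 2 c b`, that is, with nonpositive derivative at `b`. -/
theorem sub_mul_div_one_add_div_lt {x c a b : ℝ} (hc : 0 < c) (hb : 0 < b) (hba : b < a)
    (h : x ≤ b ^ 2 + 2 * (c * b)) :
    (x - c * a) / (1 + c / a) < (x - c * b) / (1 + c / b) := by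
  have ha : 0 < a := hb.trans hba
  have rewrite_quot (t : ℝ) (ht : 0 < t) :
      (x - c * t) / (1 + c / t) = (x * t - c * t ^ 2) / (t + c) := by
    have : t + c ≠ 0 := by positivity
    field_simp
  rw [rewrite_quot a ha, rewrite_quot b hb, div_lt_div_iff₀ (by positivity) (by positivity)]
  -- The difference of the two sides factors as `c (a - b) (a b + c (a + b) - x)`.
  have hpos : 0 < a * b + c * (a + b) - x := by
    nlinarith [mul_pos (sub_pos.2 hba) hb, mul_pos (sub_pos.2 hba) hc]
  nlinarith [mul_pos (mul_pos hc (sub_pos.2 hba)) hpos]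

/-- The derivative of `f₂` is nonpositive at `a₁₂`; here `x` plays the role of `m`, `b` that of
`a₁₂` and `c` that of `(m - 2) √(m / (m - 1)) / 2`, the last two given through `c²` and `c b`. -/
theorem le_sq_add_two_mul {x c b : ℝ} (hx : 3 ≤ x) (hc : 0 < c)
    (hc2 : c ^ 2 = (x - 2) ^ 2 * x / (4 * (x - 1)))
    (hcb : c * b = x * (x ^ 2 - 3 * x + 1) / (x - 1) ^ 2) :
    x ≤ b ^ 2 + 2 * (c * b) := by
  obtain ⟨k, rfl⟩ : ∃ k, x = k + 3 := ⟨x - 3, by ring⟩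
  have hk : 0 ≤ k := by linarith
  have h2 : k + 3 - 1 = k + 2 := by ring
  rw [h2] at hc2 hcb
  -- Multiplying by `c²` turns the claim into one about `c²` and `c b` alone.
  refine le_of_mul_le_mul_left ?_ (sq_pos_of_pos hc)
  have e : c ^ 2 * (b ^ 2 + 2 * (c * b)) = (c * b) ^ 2 + 2 * c ^ 2 * (c * b) := by ring
  rw [e, hcb, hc2, ← sub_nonneg]
  have key : ((k + 3) * ((k + 3) ^ 2 - 3 * (k + 3) + 1) / (k + 2) ^ 2) ^ 2 +
      2 * ((k + 3 - 2) ^ 2 * (k + 3) / (4 * (k + 2))) *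
        ((k + 3) * ((k + 3) ^ 2 - 3 * (k + 3) + 1) / (k + 2) ^ 2) -
      (k + 3 - 2) ^ 2 * (k + 3) / (4 * (k + 2)) * (k + 3) =
      (k + 3) ^ 2 * (4 * (k ^ 2 + 3 * k + 1) ^ 2 - (k + 2) * (2 - 2 * k - k ^ 2) * (k + 1) ^ 2) /
        (4 * (k + 2) ^ 4) := by
    field_simp
    ring
  rw [key]
  have hnum : 4 * (k ^ 2 + 3 * k + 1) ^ 2 - (k + 2) * (2 - 2 * k - k ^ 2) * (k + 1) ^ 2 =
      k ^ 5 + 10 * k ^ 4 + 35 * k ^ 3 + 48 * k ^ 2 + 18 * k := by ring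
  -- All coefficients in `k = x - 3` are nonnegative.
  rw [hnum]
  positivity

/-- For every `a > 0`, `min(f₁(a), f₂(a)) ≤ (m²/(m−1)²)(1 + (m−2)²(m−1)/(4(m²−3m+1)))⁻¹`,
with equality if and only if `a = a₁₂`: the supremum over `(0,∞)` of `min(f₁, f₂)` is
attained exactly at `a₁₂` and equals this value. -/
theorem min_f₁_f₂_max (m : ℕ) (hm : 3 ≤ m)
    (a₁₂ : ℝ)
    (ha₁₂ : a₁₂ = 2 * (m : ℝ) * ((m : ℝ) ^ 2 - 3 * (m : ℝ) + 1) /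
      (((m : ℝ) - 2) * ((m : ℝ) - 1) ^ 2 * Real.sqrt ((m : ℝ) / ((m : ℝ) - 1)))) :
    ∀ a : ℝ, 0 < a →
      (min (f₁ m a) (f₂ m a) ≤ ((m : ℝ) ^ 2 / ((m : ℝ) - 1) ^ 2) *
        (1 + ((m : ℝ) - 2) ^ 2 * ((m : ℝ) - 1) /
          (4 * ((m : ℝ) ^ 2 - 3 * (m : ℝ) + 1)))⁻¹ ∧
      (min (f₁ m a) (f₂ m a) = ((m : ℝ) ^ 2 / ((m : ℝ) - 1) ^ 2) *
        (1 + ((m : ℝ) - 2) ^ 2 * ((m : ℝ) - 1) /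
          (4 * ((m : ℝ) ^ 2 - 3 * (m : ℝ) + 1)))⁻¹ ↔ a = a₁₂)) := by
  intro a ha
  have hx : (3 : ℝ) ≤ m := by exact_mod_cast hm
  unfold f₁ f₂
  generalize (m : ℝ) = x at *
  have h1 : 0 < x - 1 := by linarith
  have h2 : 0 < x - 2 := by linarith
  have hx0 : 0 < x := by linarith
  have hq : 0 < x ^ 2 - 3 * x + 1 := by nlinarith
  have hs : 0 < Real.sqrt (x / (x - 1)) := Real.sqrt_pos.2 (by positivity)
  have hs2 : Real.sqrt (x / (x - 1)) ^ 2 = x / (x - 1) := Real.sq_sqrt (by positivity)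
  generalize Real.sqrt (x / (x - 1)) = s at *
  obtain ⟨c, hcs⟩ : ∃ c, c = (x - 2) * s / 2 := ⟨_, rfl⟩
  have hc : 0 < c := by rw [hcs]; positivity
  have hb : 0 < a₁₂ := by rw [ha₁₂]; positivity
  have hc2 : c ^ 2 = (x - 2) ^ 2 * x / (4 * (x - 1)) := by
    rw [hcs, div_pow, mul_pow, hs2]
    field_simp
    norm_num
  have hcb : c * a₁₂ = x * (x ^ 2 - 3 * x + 1) / (x - 1) ^ 2 := by
    rw [hcs, ha₁₂]
    field_simp
  have hdiv : c / a₁₂ = (x - 2) ^ 2 * (x - 1) / (4 * (x ^ 2 - 3 * x + 1)) := by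
    have : c / a₁₂ = c ^ 2 / (c * a₁₂) := by field_simp
    rw [this, hc2, hcb]
    field_simp
  have hmeet : x - c * a₁₂ = x ^ 2 / (x - 1) ^ 2 := by
    rw [hcb]
    field_simp
    ring
  have hK : 0 < x ^ 2 / (x - 1) ^ 2 := by positivity
  have hden : (x - 2) / (2 * a) * s = c / a := by rw [hcs]; field_simp
  have hnum : a * (x - 2) / 2 * s = c * a := by rw [hcs]; ring
  rw [← hdiv, ← div_eq_mul_inv, hden, hnum]
  rcases lt_trichotomy a a₁₂ with h | rfl | h
  · have hlt := (min_le_left _ ((x - c * a) / (1 + c / a))).trans_lt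
      (div_one_add_div_lt hK hc ha h)
    exact ⟨hlt.le, iff_of_false hlt.ne h.ne⟩
  · rw [hmeet, min_self]
    exact ⟨le_rfl, iff_of_true rfl rfl⟩
  · have hlt := (min_le_right (x ^ 2 / (x - 1) ^ 2 / (1 + c / a)) _).trans_lt
      (sub_mul_div_one_add_div_lt hc hb h (le_sq_add_two_mul hx hc hc2 hcb))
    rw [hmeet] at hlt
    exact ⟨hlt.le, iff_of_false hlt.ne h.ne'⟩
end

section
/- Let m ≥ 3 be an integer and let λ₁ > 0, h ≥ 0, k be real numbers with k ≠ 0. Set a₁₂ = 2m(m²−3m+1) / ((m−2)(m−1)²·√(m/(m−1))). Then f₄(a) < f₂(a) for every a ∈ (0, a₁₂). -/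
noncomputable def f₄ (m : ℕ) (lam h k : ℝ) (a : ℝ) : ℝ :=
  ((m : ℝ) ^ 2 / ((m : ℝ) - 1) ^ 2 * (lam - (((m : ℝ) - 1) ^ 2 / (m : ℝ)) * (k ^ 2 - h ^ 2))
      - (a * ((m : ℝ) - 2) / 2) * h ^ 2 * Real.sqrt ((m : ℝ) / ((m : ℝ) - 1))) /
    ((lam + h ^ 2) * (1 + (((m : ℝ) - 2) / (2 * a)) * Real.sqrt ((m : ℝ) / ((m : ℝ) - 1))))

/-- If `λ₁ > 0` and `k ≠ 0` then `f₄ < f₂` on `(0, a₁₂)`. -/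
theorem f₄_lt_f₂ (m : ℕ) (hm : 3 ≤ m) (lam h k : ℝ)
    (hlam : 0 < lam) (hh : 0 ≤ h) (hk : k ≠ 0)
    (a₁₂ : ℝ)
    (ha₁₂ : a₁₂ = 2 * (m : ℝ) * ((m : ℝ) ^ 2 - 3 * (m : ℝ) + 1) /
      (((m : ℝ) - 2) * ((m : ℝ) - 1) ^ 2 * Real.sqrt ((m : ℝ) / ((m : ℝ) - 1)))) :
    ∀ a : ℝ, 0 < a → a < a₁₂ → f₄ m lam h k a < f₂ m a := by
  intro a ha haa
  have hm3 : (3 : ℝ) ≤ m := by exact_mod_cast hm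
  have hs : 0 < Real.sqrt ((m : ℝ) / ((m : ℝ) - 1)) :=
    Real.sqrt_pos.mpr (div_pos (by linarith) (by linarith))
  unfold f₄ f₂
  subst ha₁₂
  generalize Real.sqrt ((m : ℝ) / ((m : ℝ) - 1)) = s at hs haa ⊢
  generalize (m : ℝ) = x at hm3 haa ⊢
  have hx1 : 0 < x - 1 := by linarith
  have hx2 : 0 < x - 2 := by linarith
  have hD : 0 < 1 + (x - 2) / (2 * a) * s := by positivity
  have hL : 0 < lam + h ^ 2 := by positivity
  -- `a < a₁₂` says exactly that the numerator of `f₂` exceeds `x² / (x - 1)²`.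
  have hB : x ^ 2 / (x - 1) ^ 2 < x - a * (x - 2) / 2 * s := by
    rw [lt_div_iff₀ (by positivity)] at haa
    rw [div_lt_iff₀ (by positivity)]
    linarith
  have hk2 : 0 < x * k ^ 2 := by positivity
  have hcancel : x ^ 2 / (x - 1) ^ 2 * ((x - 1) ^ 2 / x) = x := by field_simp
  rw [← div_div]
  refine div_lt_div_of_pos_right ?_ hD
  rw [div_lt_iff₀ hL]
  have h1 := mul_lt_mul_of_pos_right hB hlam
  linear_combination h1 + hk2 - (k ^ 2 - h ^ 2) * hcancel
end

section
/- Let m ≥ 3 be an integer and let λ₁ > 0, h ≥ 0, k be real numbers. Set a₂₄ = (2m/((m−2)·√(m/(m−1))))·(1 − m/(m−1)² + k²/λ₁). Then a₂₄ > 0 and f₄(a₂₄) = f₂(a₂₄) = (m²/(m−1)²)·(1 − (m−1)²k²/(mλ₁)) · (1 + (m−1)(m−2)²/(4(m²−3m+1 + (m−1)²k²/λ₁)))^{−1}. Moreover, if k ≠ 0 then f₄(a₂₄) > 0 if and only if λ₁ > (m−1)²k²/m. -/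
/-- At `a₂₄ = (2m/((m−2)√(m/(m−1))))(1 − m/(m−1)² + k²/λ₁)` the graphs of `f₂` and `f₄`
intersect; the common value is
`(m²/(m−1)²)(1 − (m−1)²k²/(mλ₁))(1 + (m−1)(m−2)²/(4(m²−3m+1 + (m−1)²k²/λ₁)))⁻¹`, and if
`k ≠ 0` it is positive if and only if `λ₁ > (m−1)²k²/m`. -/
theorem f₂_f₄_intersection (m : ℕ) (hm : 3 ≤ m) (lam h k : ℝ)
    (hlam : 0 < lam) (hh : 0 ≤ h)
    (a₂₄ : ℝ)
    (ha₂₄ : a₂₄ = (2 * (m : ℝ) / (((m : ℝ) - 2) * Real.sqrt ((m : ℝ) / ((m : ℝ) - 1)))) *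
      (1 - (m : ℝ) / ((m : ℝ) - 1) ^ 2 + k ^ 2 / lam)) :
    0 < a₂₄ ∧
    f₄ m lam h k a₂₄ = f₂ m a₂₄ ∧
    f₂ m a₂₄ = ((m : ℝ) ^ 2 / ((m : ℝ) - 1) ^ 2) *
      (1 - ((m : ℝ) - 1) ^ 2 * k ^ 2 / ((m : ℝ) * lam)) *
      (1 + ((m : ℝ) - 1) * ((m : ℝ) - 2) ^ 2 /
        (4 * ((m : ℝ) ^ 2 - 3 * (m : ℝ) + 1 + ((m : ℝ) - 1) ^ 2 * k ^ 2 / lam)))⁻¹ ∧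
    (k ≠ 0 → (0 < f₄ m lam h k a₂₄ ↔ ((m : ℝ) - 1) ^ 2 * k ^ 2 / (m : ℝ) < lam)) := by
  have hn : (3 : ℝ) ≤ m := by exact_mod_cast hm
  unfold f₂ f₄
  generalize (m : ℝ) = n at *
  have hn1 : 0 < n - 1 := by linarith
  have hn2 : 0 < n - 2 := by linarith
  have hn0 : 0 < n := by linarith
  have hs : 0 < √(n / (n - 1)) := Real.sqrt_pos.2 (div_pos hn0 hn1)
  have hss : √(n / (n - 1)) ^ 2 = n / (n - 1) := Real.sq_sqrt (div_pos hn0 hn1).le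
  generalize √(n / (n - 1)) = s at *
  obtain ⟨t, ht⟩ : ∃ t, t = 1 - n / (n - 1) ^ 2 + k ^ 2 / lam := ⟨_, rfl⟩
  have hQ : n ^ 2 - 3 * n + 1 + (n - 1) ^ 2 * k ^ 2 / lam = (n - 1) ^ 2 * t := by
    rw [ht]; field_simp; ring
  have hQ0 : 0 < n ^ 2 - 3 * n + 1 + (n - 1) ^ 2 * k ^ 2 / lam := by
    have : 0 ≤ (n - 1) ^ 2 * k ^ 2 / lam := by positivity
    nlinarith
  have ht0 : 0 < t := by
    rw [hQ] at hQ0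
    exact pos_of_mul_pos_right hQ0 (sq_nonneg _)
  rw [← ht] at ha₂₄
  have ha0 : 0 < a₂₄ := by rw [ha₂₄]; positivity
  have e1 : a₂₄ * (n - 2) / 2 * s = n * t := by
    rw [ha₂₄]; field_simp
  have e2 : (n - 2) / (2 * a₂₄) * s
      = (n - 1) * (n - 2) ^ 2 / (4 * ((n - 1) ^ 2 * t)) := by
    have : (n - 2) / (2 * a₂₄) * s = (n - 2) ^ 2 * s ^ 2 / (4 * n * t) := by
      rw [ha₂₄]; field_simp; norm_num
    rw [this, hss]; field_simp
  have e3 : a₂₄ * (n - 2) / 2 * h ^ 2 * s = h ^ 2 * (n * t) := by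
    rw [← e1]; ring
  have hD : 0 < 1 + (n - 1) * (n - 2) ^ 2 / (4 * ((n - 1) ^ 2 * t)) := by positivity
  rw [e1, e2, e3, hQ]
  generalize 1 + (n - 1) * (n - 2) ^ 2 / (4 * ((n - 1) ^ 2 * t)) = D at *
  have hlh : 0 < lam + h ^ 2 := by positivity
  have num₂ : n - n * t = n ^ 2 / (n - 1) ^ 2 * (1 - (n - 1) ^ 2 * k ^ 2 / (n * lam)) := by
    rw [ht]; field_simp; ring
  have num₄ : n ^ 2 / (n - 1) ^ 2 * (lam - (n - 1) ^ 2 / n * (k ^ 2 - h ^ 2)) - h ^ 2 * (n * t)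
      = (lam + h ^ 2) * (n - n * t) := by
    rw [ht]; field_simp; ring
  have hc : 0 < n ^ 2 / (n - 1) ^ 2 := by positivity
  rw [num₄, mul_div_mul_left _ _ hlh.ne']
  refine ⟨ha0, rfl, by rw [num₂, div_eq_mul_inv], fun _ => ?_⟩
  rw [div_pos_iff_of_pos_right hD, num₂, mul_pos_iff_of_pos_left hc, sub_pos,
    div_lt_one (by positivity), div_lt_iff₀ hn0, mul_comm n lam]
end

section
/- Let m ≥ 3 be an integer and let λ₁ ≥ 0, h > 0, k be real numbers such that 𝒜 := λ₁ − ((m−1)²/m)(k² − h²) > 0. Set ℬ = −1 + √(1 + 4m𝒜/((m−1)(m−2)²h²)) and a₄ = ((m−2)/2)·√(m/(m−1))·ℬ. Then ℬ > 0, a₄ > 0, and f₄ attains its supremum over (0,∞) exactly at a₄, with f₄(a₄) = m(m−2)²ℬ²h² / (4(m−1)(λ₁+h²)), which also equals (m²/(m−1)²)·(𝒜 − ((m−2)²(m−1)/(4m))·ℬ·h²) / ((1 + 1/ℬ)(λ₁ + h²)). -/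
/-- Completed-square form of `f₄`, for the constant term of the numerator parametrized as
`c² h² (B² + 2 B)`. -/
theorem f₄_eq_of_coeff (m : ℕ) (lam h k c B a : ℝ) (hc : 0 < c) (ha : 0 < a)
    (hL : 0 < lam + h ^ 2)
    (hcdef : c = (((m : ℝ) - 2) / 2) * Real.sqrt ((m : ℝ) / ((m : ℝ) - 1)))
    (hN : (m : ℝ) ^ 2 / ((m : ℝ) - 1) ^ 2 *
      (lam - (((m : ℝ) - 1) ^ 2 / (m : ℝ)) * (k ^ 2 - h ^ 2)) =
        c ^ 2 * h ^ 2 * (B ^ 2 + 2 * B)) :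
    f₄ m lam h k a = c ^ 2 * h ^ 2 * B ^ 2 / (lam + h ^ 2) -
      c * h ^ 2 * (a - c * B) ^ 2 / ((lam + h ^ 2) * (a + c)) := by
  have h1 : (a * ((m : ℝ) - 2) / 2) * h ^ 2 * Real.sqrt ((m : ℝ) / ((m : ℝ) - 1)) =
      a * c * h ^ 2 := by rw [hcdef]; ring
  have h2 : (((m : ℝ) - 2) / (2 * a)) * Real.sqrt ((m : ℝ) / ((m : ℝ) - 1)) = c / a := by
    rw [hcdef]; field_simp
  have hac : 0 < a + c := by positivity
  have h3 : 1 + c / a = (a + c) / a := by field_simp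
  unfold f₄
  rw [hN, h1, h2, h3]
  field_simp
  ring

/-- If `𝒜 = λ₁ − ((m−1)²/m)(k² − h²) > 0`, then with
`ℬ = −1 + √(1 + 4m𝒜/((m−1)(m−2)²h²))` and `a₄ = ((m−2)/2)√(m/(m−1))ℬ` we have `ℬ > 0`,
`a₄ > 0`, `f₄` attains its supremum over `(0,∞)` exactly at `a₄`, and
`f₄(a₄) = m(m−2)²ℬ²h²/(4(m−1)(λ₁+h²))
        = (m²/(m−1)²)(𝒜 − ((m−2)²(m−1)/(4m))ℬh²)/((1 + 1/ℬ)(λ₁ + h²))`. -/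
theorem f₄_max (m : ℕ) (hm : 3 ≤ m) (lam h k : ℝ)
    (hlam : 0 ≤ lam) (hh : 0 < h)
    (A B a₄ : ℝ)
    (hA : A = lam - (((m : ℝ) - 1) ^ 2 / (m : ℝ)) * (k ^ 2 - h ^ 2))
    (hApos : 0 < A)
    (hB : B = -1 + Real.sqrt (1 + 4 * (m : ℝ) * A /
      (((m : ℝ) - 1) * ((m : ℝ) - 2) ^ 2 * h ^ 2)))
    (ha₄ : a₄ = (((m : ℝ) - 2) / 2) * Real.sqrt ((m : ℝ) / ((m : ℝ) - 1)) * B) :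
    0 < B ∧ 0 < a₄ ∧
    (∀ a : ℝ, 0 < a → a ≠ a₄ → f₄ m lam h k a < f₄ m lam h k a₄) ∧
    f₄ m lam h k a₄ =
      (m : ℝ) * ((m : ℝ) - 2) ^ 2 * B ^ 2 * h ^ 2 /
        (4 * ((m : ℝ) - 1) * (lam + h ^ 2)) ∧
    f₄ m lam h k a₄ =
      ((m : ℝ) ^ 2 / ((m : ℝ) - 1) ^ 2) *
        (A - (((m : ℝ) - 2) ^ 2 * ((m : ℝ) - 1) / (4 * (m : ℝ))) * B * h ^ 2) /
        ((1 + 1 / B) * (lam + h ^ 2)) := by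
  have hm' : (3 : ℝ) ≤ m := by exact_mod_cast hm
  have hm0 : (0 : ℝ) < m := by linarith
  have hm1 : (0 : ℝ) < (m : ℝ) - 1 := by linarith
  have hm2 : (0 : ℝ) < (m : ℝ) - 2 := by linarith
  have hL : 0 < lam + h ^ 2 := by positivity
  have hx : 0 < 4 * (m : ℝ) * A / (((m : ℝ) - 1) * ((m : ℝ) - 2) ^ 2 * h ^ 2) := by positivity
  have hBpos : 0 < B := by
    have : 1 < Real.sqrt (1 + 4 * (m : ℝ) * A /
        (((m : ℝ) - 1) * ((m : ℝ) - 2) ^ 2 * h ^ 2)) := by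
      rw [Real.lt_sqrt zero_le_one]; linarith
    linarith
  have hBq : B ^ 2 + 2 * B =
      4 * (m : ℝ) * A / (((m : ℝ) - 1) * ((m : ℝ) - 2) ^ 2 * h ^ 2) := by
    have hs := Real.sq_sqrt (add_pos one_pos hx).le
    rw [show Real.sqrt (1 + 4 * (m : ℝ) * A /
        (((m : ℝ) - 1) * ((m : ℝ) - 2) ^ 2 * h ^ 2)) = B + 1 by linarith] at hs
    linarith
  obtain ⟨c, hcdef⟩ :
      ∃ c, c = (((m : ℝ) - 2) / 2) * Real.sqrt ((m : ℝ) / ((m : ℝ) - 1)) := ⟨_, rfl⟩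
  have hc : 0 < c := by rw [hcdef]; positivity
  have hc2 : c ^ 2 = (m : ℝ) * ((m : ℝ) - 2) ^ 2 / (4 * ((m : ℝ) - 1)) := by
    rw [hcdef, mul_pow, Real.sq_sqrt (by positivity)]
    field_simp
    ring
  have hNA : (m : ℝ) ^ 2 / ((m : ℝ) - 1) ^ 2 * A = c ^ 2 * h ^ 2 * (B ^ 2 + 2 * B) := by
    rw [hBq, hc2]
    field_simp
  have key : ∀ a : ℝ, 0 < a → f₄ m lam h k a = c ^ 2 * h ^ 2 * B ^ 2 / (lam + h ^ 2) -
      c * h ^ 2 * (a - c * B) ^ 2 / ((lam + h ^ 2) * (a + c)) := fun a ha =>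
    f₄_eq_of_coeff m lam h k c B a hc ha hL hcdef (hA ▸ hNA)
  rw [← hcdef] at ha₄
  have ha₄pos : 0 < a₄ := by rw [ha₄]; positivity
  have hval : f₄ m lam h k a₄ = c ^ 2 * h ^ 2 * B ^ 2 / (lam + h ^ 2) := by
    rw [key a₄ ha₄pos, ha₄]; simp
  refine ⟨hBpos, ha₄pos, ?_, ?_, ?_⟩
  · intro a ha hne
    rw [hval, key a ha]
    have hsub : a - c * B ≠ 0 := by rw [← ha₄]; exact sub_ne_zero.mpr hne
    have : 0 < c * h ^ 2 * (a - c * B) ^ 2 / ((lam + h ^ 2) * (a + c)) := by positivity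
    linarith
  · rw [hval, hc2]
    field_simp
  · have hcoef : (m : ℝ) ^ 2 / ((m : ℝ) - 1) ^ 2 *
        (A - (((m : ℝ) - 2) ^ 2 * ((m : ℝ) - 1) / (4 * (m : ℝ))) * B * h ^ 2) =
        c ^ 2 * h ^ 2 * (B ^ 2 + B) := by
      have : (m : ℝ) ^ 2 / ((m : ℝ) - 1) ^ 2 *
          ((((m : ℝ) - 2) ^ 2 * ((m : ℝ) - 1) / (4 * (m : ℝ))) * B * h ^ 2) =
          c ^ 2 * B * h ^ 2 := by
        rw [hc2]
        field_simp
      rw [mul_sub, hNA, this]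
      ring
    have hB1 : 1 + 1 / B = (B + 1) / B := by field_simp
    rw [hval, hcoef, hB1]
    field_simp
end

section
/- Let m ≥ 3 be an integer and let S > 0, Λ > 0, a > 0, λ₁ > 0 and k be real numbers. Then there exist e > 0, b > 0 and c > 0 such that (m/(m−1) − c − (1+b)·S·B(m,a)·Λ²)·λ₁/(1+e) > (m−1)·k² if and only if S·Λ² < f₃(a). -/
/-!
Write `X = S * B(m,a) * Λ²`, `P = (m-1) k² ≥ 0` and `M = m/(m-1)`. Once multiplied by
`1 + e`, the required inequality `P < (M - c - (1+b) X) λ₁ / (1+e)` has a right side decreasing in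
`b`, `c` and a left side nondecreasing in `e`, while the quotient tends to `(M - X) λ₁` as they tend to `0`, so suitable
parameters exist exactly when `P < (M - X) λ₁` (`exists_perturbation_iff`). Since
`B(m,a) = (m-1)/m * (1 + (m-2)/(2a) * √(m/(m-1)))` (`Bconst_eq`), solving that inequality for `S Λ²`
gives `S Λ² < f₃(a)`.
-/

noncomputable def Bconst (m : ℕ) (a : ℝ) : ℝ :=
  ((m : ℝ) - 2) * Real.sqrt ((m : ℝ) * ((m : ℝ) - 1)) / (2 * a * (m : ℝ)) +
    ((m : ℝ) - 1) / (m : ℝ)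

noncomputable def f₃ (m : ℕ) (k lam : ℝ) (a : ℝ) : ℝ :=
  ((m : ℝ) ^ 2 / ((m : ℝ) - 1) ^ 2) * (1 - ((m : ℝ) - 1) ^ 2 * k ^ 2 / ((m : ℝ) * lam)) /
    (1 + (((m : ℝ) - 2) / (2 * a)) * Real.sqrt ((m : ℝ) / ((m : ℝ) - 1)))

theorem Bconst_eq (m : ℕ) (hm : 3 ≤ m) (a : ℝ) (ha : 0 < a) :
    Bconst m a = ((m : ℝ) - 1) / m *
      (1 + (((m : ℝ) - 2) / (2 * a)) * Real.sqrt ((m : ℝ) / ((m : ℝ) - 1))) := by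
  have h3 : (3 : ℝ) ≤ m := by exact_mod_cast hm
  have h1 : (0 : ℝ) < m - 1 := by linarith
  have h0 : (0 : ℝ) < m := by linarith
  have hs : Real.sqrt ((m : ℝ) * ((m : ℝ) - 1)) =
      ((m : ℝ) - 1) * Real.sqrt ((m : ℝ) / ((m : ℝ) - 1)) := by
    have : (m : ℝ) * ((m : ℝ) - 1) = ((m : ℝ) - 1) ^ 2 * ((m : ℝ) / ((m : ℝ) - 1)) := by
      field_simp
    rw [this, Real.sqrt_mul (sq_nonneg _), Real.sqrt_sq h1.le]
  unfold Bconst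
  rw [hs]
  field_simp
  ring

theorem exists_perturbation_iff {M X P lam : ℝ} (hX : 0 < X) (hP : 0 ≤ P) (hlam : 0 < lam) :
    (∃ e b c : ℝ, 0 < e ∧ 0 < b ∧ 0 < c ∧ P < (M - c - (1 + b) * X) * lam / (1 + e)) ↔
      P < (M - X) * lam := by
  constructor
  · rintro ⟨e, b, c, he, hb, hc, h⟩
    rw [lt_div_iff₀ (by linarith)] at h
    have h1 : 0 < (c + b * X) * lam := by positivity
    have h2 : 0 ≤ P * e := by positivity
    linarith
  · intro h
    obtain ⟨d, hd⟩ : ∃ d, d = (M - X) * lam - P := ⟨_, rfl⟩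
    have hd0 : 0 < d := by linarith
    -- `b` and `c` each use a quarter of the gap `d`, and `e` costs less than a further quarter.
    refine ⟨d / (4 * (P + 1)), d / (4 * lam * X), d / (4 * lam), by positivity, by positivity,
      by positivity, ?_⟩
    rw [lt_div_iff₀ (by positivity)]
    have h1 : (M - d / (4 * lam) - (1 + d / (4 * lam * X)) * X) * lam =
        (M - X) * lam - d / 2 := by
      field_simp
      ring
    have h2 : P * (d / (4 * (P + 1))) ≤ d / 4 := by
      rw [← mul_div_assoc, div_le_div_iff₀ (by positivity) (by norm_num)]
      nlinarith
    rw [h1]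
    linarith

/-- There exist `e, b, c > 0` with
`(m/(m−1) − c − (1+b)·S·B(m,a)·Λ²)·λ₁/(1+e) > (m−1)k²` if and only if `S·Λ² < f₃(a)`. -/
theorem Cbar_lambda_pos_iff (m : ℕ) (hm : 3 ≤ m) (S Λ a lam k : ℝ)
    (hS : 0 < S) (hΛ : 0 < Λ) (ha : 0 < a) (hlam : 0 < lam) :
    (∃ e b c : ℝ, 0 < e ∧ 0 < b ∧ 0 < c ∧
        ((m : ℝ) - 1) * k ^ 2 <
          ((m : ℝ) / ((m : ℝ) - 1) - c - (1 + b) * S * Bconst m a * Λ ^ 2) * lam / (1 + e)) ↔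
      S * Λ ^ 2 < f₃ m k lam a := by
  have h3 : (3 : ℝ) ≤ m := by exact_mod_cast hm
  have h2 : (0 : ℝ) < m - 2 := by linarith
  have h1 : (0 : ℝ) < m - 1 := by linarith
  have h0 : (0 : ℝ) < m := by linarith
  have hB := Bconst_eq m hm a ha
  unfold f₃
  have hD : 0 < 1 + (((m : ℝ) - 2) / (2 * a)) * Real.sqrt ((m : ℝ) / ((m : ℝ) - 1)) := by
    positivity
  generalize 1 + (((m : ℝ) - 2) / (2 * a)) * Real.sqrt ((m : ℝ) / ((m : ℝ) - 1)) = D at hB hD ⊢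
  have hBpos : 0 < Bconst m a := by
    rw [hB]
    positivity
  have key := exists_perturbation_iff (M := (m : ℝ) / ((m : ℝ) - 1)) (X := S * Bconst m a * Λ ^ 2)
    (P := ((m : ℝ) - 1) * k ^ 2) (by positivity) (by positivity) hlam
  simp only [← mul_assoc] at key ⊢
  rw [key, hB, lt_div_iff₀ hD, ← sub_pos, ← sub_pos (b := S * Λ ^ 2 * D)]
  -- The two gaps differ by the positive factor `λ₁ (m-1)/m`.
  have h : ((m : ℝ) / ((m : ℝ) - 1) - S * (((m : ℝ) - 1) / m * D) * Λ ^ 2) * lam -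
      ((m : ℝ) - 1) * k ^ 2 = (lam * ((m : ℝ) - 1) / m) *
      ((m : ℝ) ^ 2 / ((m : ℝ) - 1) ^ 2 * (1 - ((m : ℝ) - 1) ^ 2 * k ^ 2 / ((m : ℝ) * lam)) -
        S * Λ ^ 2 * D) := by
    field_simp
    ring
  simp only [← mul_assoc] at h ⊢
  rw [h]
  exact mul_pos_iff_of_pos_left (by positivity)
end
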